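/- Let a > 0, ν > 0, μ > 0, Ω = ℝ × [a,∞), φ(x) = e^{ν|x|}, ψ(y) = e^{(μ/2)y²}. For every test function v on Ω: μ ∫_Ω y |v|² φ²ψ² dx dy ≤ ‖∂v/∂y‖_{φ,ψ} ‖v‖_{φ,ψ}. -/

import Mathlib

/-!
Since `∂_y (φ²ψ²) = 2 μ y φ²ψ²`, integrating the weight by parts in `y` against `|v|²` gives
`2 μ ∫ y |v|² φ²ψ² = -2 ∫ Re (v̄ ∂_y v) φ²ψ²`, without boundary terms because `v` has compact
support off the line `y = a`. The claim follows by the Cauchy–Schwarz inequality, first pointwise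
in `ℂ` and then in the weighted `L²` space.

The support condition also lets every integral over `Ω` be replaced by one over `ℝ²`. The weight
is not differentiable in `x` at `x = 0`, so the integration by parts
`integral_norm_sq_mul_weight` is performed with line derivatives in direction `(0, 1)` only.
-/

open MeasureTheory Real

noncomputable section

/-- The domain `Ω = ℝ × [a, ∞)` as a subset of `ℝ²`. -/
def dom (a : ℝ) : Set (ℝ × ℝ) := {p : ℝ × ℝ | a ≤ p.2}

/-- The squared weight `φ(x)² ψ(y)²` where `φ(x) = e^{ν|x|}` and `ψ(y) = e^{(μ/2)y²}`. -/
def W (ν μ : ℝ) (p : ℝ × ℝ) : ℝ :=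
  Real.exp (ν * |p.1|) ^ 2 * Real.exp (μ / 2 * p.2 ^ 2) ^ 2

/-- A test function: smooth, with compact support contained in `ℝ × (a, ∞)`. -/
def IsTest (a : ℝ) (v : ℝ × ℝ → ℂ) : Prop :=
  ContDiff ℝ (⊤ : ℕ∞) v ∧ HasCompactSupport v ∧ tsupport v ⊆ {p : ℝ × ℝ | a < p.2}

/-- Partial derivative in the first (x) variable. -/
def dX (v : ℝ × ℝ → ℂ) (p : ℝ × ℝ) : ℂ := fderiv ℝ v p ((1 : ℝ), (0 : ℝ))

/-- Partial derivative in the second (y) variable. -/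
def dY (v : ℝ × ℝ → ℂ) (p : ℝ × ℝ) : ℂ := fderiv ℝ v p ((0 : ℝ), (1 : ℝ))

/-- Squared weighted L² norm `‖v‖²_{φ,ψ}`. -/
def L2normSq (a ν μ : ℝ) (v : ℝ × ℝ → ℂ) : ℝ :=
  ∫ p in dom a, ‖v p‖ ^ 2 * W ν μ p

/-- Squared weighted V norm
`‖v‖²_{V} = ‖v‖²_{φ,ψ} + ‖√y ∂v/∂x‖²_{φ,ψ} + ‖√y ∂v/∂y‖²_{φ,ψ}`. -/
def VnormSq (a ν μ : ℝ) (v : ℝ × ℝ → ℂ) : ℝ :=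
  L2normSq a ν μ v + (∫ p in dom a, p.2 * ‖dX v p‖ ^ 2 * W ν μ p)
    + ∫ p in dom a, p.2 * ‖dY v p‖ ^ 2 * W ν μ p

/-- The Heston operator `L^H`. -/
def LH (σ κ m r ρ ω : ℝ) (u : ℝ × ℝ → ℂ) (p : ℝ × ℝ) : ℂ :=
  -(1 / 2 : ℂ) * (p.2 : ℂ) * dX (dX u) p
    - ((σ ^ 2 / 2 : ℝ) : ℂ) * (p.2 : ℂ) * dY (dY u) p
    - ((ρ * σ : ℝ) : ℂ) * (p.2 : ℂ) * dY (dX u) p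
    - ((ω * ρ * σ * p.2 ^ 2 - 1 / 2 * p.2 + r : ℝ) : ℂ) * dX u p
    - ((ω * σ ^ 2 * p.2 ^ 2 + κ * (m - p.2) : ℝ) : ℂ) * dY u p
    - ((1 / 2 * ω * σ ^ 2 * p.2 * (ω * p.2 ^ 2 + 1) + ω * p.2 * κ * (m - p.2) - r : ℝ) : ℂ) * u p

/-- The sesquilinear form `a_H^{φ,ψ}(u,v) = ∫_Ω (L^H u) conj(v) φ²ψ² dx dy`. -/
def formH (a ν μ σ κ m r ρ ω : ℝ) (u v : ℝ × ℝ → ℂ) : ℂ :=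
  ∫ p in dom a, LH σ κ m r ρ ω u p * (starRingEnd ℂ) (v p) * ((W ν μ p : ℝ) : ℂ)

lemma W_pos (ν μ : ℝ) (p : ℝ × ℝ) : 0 < W ν μ p := by
  unfold W; positivity

lemma continuous_W (ν μ : ℝ) : Continuous (W ν μ) := by
  unfold W; fun_prop

lemma W_hasLineDerivAt (ν μ : ℝ) (p : ℝ × ℝ) :
    HasLineDerivAt ℝ (W ν μ) (2 * μ * p.2 * W ν μ p) p ((0 : ℝ), (1 : ℝ)) := by
  unfold HasLineDerivAt W
  have h1 : HasDerivAt (fun t : ℝ => p.2 + t) 1 0 := by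
    simpa using (hasDerivAt_id (0 : ℝ)).const_add p.2
  have h := ((((h1.pow 2).const_mul (μ / 2)).exp).pow 2).const_mul (Real.exp (ν * |p.1|) ^ 2)
  convert h using 1
  · ext t; simp
  · simp
  · simp; ring

lemma IsTest.continuous_dY {a : ℝ} {v : ℝ × ℝ → ℂ} (hv : IsTest a v) : Continuous (dY v) := by
  have h := hv.1.continuous_fderiv (by simp)
  unfold dY; fun_prop

lemma IsTest.hasCompactSupport_dY {a : ℝ} {v : ℝ × ℝ → ℂ} (hv : IsTest a v) :
    HasCompactSupport (dY v) :=
  hv.2.1.fderiv_apply (𝕜 := ℝ) ((0 : ℝ), (1 : ℝ))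

lemma IsTest.eq_zero {a : ℝ} {v : ℝ × ℝ → ℂ} (hv : IsTest a v) {p : ℝ × ℝ} (hp : p ∉ dom a) :
    v p = 0 :=
  image_eq_zero_of_notMem_tsupport fun h => hp (show a ≤ p.2 from le_of_lt (hv.2.2 h))

lemma IsTest.dY_eq_zero {a : ℝ} {v : ℝ × ℝ → ℂ} (hv : IsTest a v) {p : ℝ × ℝ}
    (hp : p ∉ dom a) : dY v p = 0 :=
  image_eq_zero_of_notMem_tsupport fun h =>
    hp (show a ≤ p.2 from
      le_of_lt (hv.2.2 (tsupport_fderiv_apply_subset ℝ ((0 : ℝ), (1 : ℝ)) h)))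

/-- Integration by parts in `y` of the weight against `|v|²`. -/
lemma integral_norm_sq_mul_weight {a : ℝ} (ν μ : ℝ) {v : ℝ × ℝ → ℂ} (hv : IsTest a v) :
    μ * ∫ p, p.2 * ‖v p‖ ^ 2 * W ν μ p = -∫ p, inner ℝ (v p) (dY v p) * W ν μ p := by
  have cv := hv.1.continuous
  have cd := hv.continuous_dY
  have cW := continuous_W ν μ
  have hsq : ∀ g : ℝ × ℝ → ℝ, Continuous g → (∀ p, v p = 0 → g p = 0) → Integrable g :=
    fun g hg h0 => hg.integrable_of_hasCompactSupport
      (hv.2.1.mono fun p hp => fun h => hp (h0 p h))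
  have key := integral_bilinear_hasLineDerivAt_right_eq_neg_left_of_integrable
    (μ := (volume : Measure (ℝ × ℝ))) (f := fun p => ‖v p‖ ^ 2)
    (f' := fun p => 2 * inner ℝ (v p) (dY v p)) (g := W ν μ)
    (g' := fun p => 2 * μ * p.2 * W ν μ p) (v := ((0 : ℝ), (1 : ℝ)))
    (B := ContinuousLinearMap.mul ℝ ℝ)
    (hsq _ (by simp only [ContinuousLinearMap.mul_apply']; fun_prop) (by intro p h; simp [h]))
    (hsq _ (by simp only [ContinuousLinearMap.mul_apply']; fun_prop) (by intro p h; simp [h]))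
    (hsq _ (by simp only [ContinuousLinearMap.mul_apply']; fun_prop) (by intro p h; simp [h]))
    (fun p _ => by
      have h := ((hv.1.differentiable (by simp) p).hasFDerivAt.norm_sq).hasLineDerivAt
        ((0 : ℝ), (1 : ℝ))
      convert h using 1
      simp [dY, mul_add])
    (fun p _ => W_hasLineDerivAt ν μ p)
  simp only [ContinuousLinearMap.mul_apply'] at key
  have e1 : ∫ p, ‖v p‖ ^ 2 * (2 * μ * p.2 * W ν μ p)
      = 2 * (μ * ∫ p, p.2 * ‖v p‖ ^ 2 * W ν μ p) := by
    rw [← integral_const_mul, ← integral_const_mul]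
    congr 1; ext p; ring
  have e2 : ∫ p, 2 * inner ℝ (v p) (dY v p) * W ν μ p
      = 2 * ∫ p, inner ℝ (v p) (dY v p) * W ν μ p := by
    rw [← integral_const_mul]
    congr 1; ext p; ring
  rw [e1, e2] at key
  linarith

/-- The Cauchy–Schwarz inequality in the weighted `L²` space. -/
lemma integral_norm_mul_norm_mul_weight_le (ν μ : ℝ) {f g : ℝ × ℝ → ℂ}
    (hf : Continuous f) (hf' : HasCompactSupport f)
    (hg : Continuous g) (hg' : HasCompactSupport g) :
    ∫ p, ‖f p‖ * ‖g p‖ * W ν μ p ≤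
      √(∫ p, ‖f p‖ ^ 2 * W ν μ p) * √(∫ p, ‖g p‖ ^ 2 * W ν μ p) := by
  have cW := (continuous_W ν μ).sqrt
  have hm : ∀ h : ℝ × ℝ → ℂ, Continuous h → HasCompactSupport h →
      MemLp (fun p => ‖h p‖ * √(W ν μ p)) (ENNReal.ofReal 2) :=
    fun h hc hs => Continuous.memLp_of_hasCompactSupport (by fun_prop)
      (hs.mono fun p hp => fun h0 => hp (by simp [h0]))
  have hCS := integral_mul_le_Lp_mul_Lq_of_nonneg (μ := (volume : Measure (ℝ × ℝ)))
    Real.HolderConjugate.two_two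
    (.of_forall fun p => by positivity) (.of_forall fun p => by positivity)
    (hm f hf hf') (hm g hg hg')
  have hs : ∀ p, √(W ν μ p) ^ 2 = W ν μ p := fun p => Real.sq_sqrt (W_pos ν μ p).le
  have e : ∀ p, ‖f p‖ * √(W ν μ p) * (‖g p‖ * √(W ν μ p)) = ‖f p‖ * ‖g p‖ * W ν μ p := by
    intro p
    linear_combination ‖f p‖ * ‖g p‖ * hs p
  simpa only [Real.rpow_two, mul_pow, hs, e, ← Real.sqrt_eq_rpow] using hCS

/-- `μ ∫ y |v|² φ²ψ² ≤ ‖∂v/∂y‖_{φ,ψ} ‖v‖_{φ,ψ}`. -/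
theorem stmt_7 (a ν μ : ℝ) (ha : 0 < a) (hν : 0 < ν) (hμ : 0 < μ)
    (v : ℝ × ℝ → ℂ) (hv : IsTest a v) :
    μ * (∫ p in dom a, p.2 * ‖v p‖ ^ 2 * W ν μ p) ≤
      Real.sqrt (∫ p in dom a, ‖dY v p‖ ^ 2 * W ν μ p) *
        Real.sqrt (∫ p in dom a, ‖v p‖ ^ 2 * W ν μ p) := by
  rw [setIntegral_eq_integral_of_forall_compl_eq_zero (fun p hp => by simp [hv.eq_zero hp]),
    setIntegral_eq_integral_of_forall_compl_eq_zero (fun p hp => by simp [hv.dY_eq_zero hp]),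
    setIntegral_eq_integral_of_forall_compl_eq_zero (fun p hp => by simp [hv.eq_zero hp]),
    integral_norm_sq_mul_weight ν μ hv, ← integral_neg]
  have cv := hv.1.continuous
  have cd := hv.continuous_dY
  have cW := continuous_W ν μ
  refine (integral_mono ?_ ?_ fun p => ?_).trans
    (integral_norm_mul_norm_mul_weight_le ν μ cd hv.hasCompactSupport_dY cv hv.2.1)
  · exact Continuous.integrable_of_hasCompactSupport (by fun_prop)
      (hv.2.1.mono fun p hp => fun h0 => hp (by simp [h0]))
  · exact Continuous.integrable_of_hasCompactSupport (by fun_prop)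
      (hv.2.1.mono fun p hp => fun h0 => hp (by simp [h0]))
  · have h := (neg_le_abs _).trans (abs_real_inner_le_norm (v p) (dY v p))
    have := mul_le_mul_of_nonneg_right h (W_pos ν μ p).le
    simp only
    linarith
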